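/- Let D be a small category and let X : D ⥤ Type be a D-set. Suppose X is isomorphic both to ∐_{i∈I} O_i and to ∐_{j∈J} Õ_j, where every O_i and every Õ_j is a D-orbit. Then there is a bijection h : I → J such that O_i is isomorphic to Õ_{h(i)} for every i ∈ I; that is, the decomposition of a D-set into orbits is unique up to reordering and isomorphic replacement of the factors. -/

import Mathlib

open CategoryTheory Limits Opposite

section FunctorCoproducts

variable {D : Type} [SmallCategory D] {J : Type} (Q : J → D ⥤ Type)

/-- Coproducts of functors to types are computed objectwise. -/
noncomputable def isColimitCofanSigmaApp (d : D) :
    IsColimit (Cofan.mk ((∐ Q).obj d) fun j => (Sigma.ι Q j).app d) :=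
  isColimitCofanMkObjOfIsColimit ((evaluation D Type).obj d) Q _ (coproductIsCoproduct Q)

theorem exists_sigmaι_app_eq {d : D} (x : (∐ Q).obj d) :
    ∃ j, ∃ y : (Q j).obj d, (Sigma.ι Q j).app d y = x :=
  Cofan.inj_jointly_surjective_of_isColimit (isColimitCofanSigmaApp Q d) x

theorem sigmaι_app_injective (j : J) (d : D) :
    Function.Injective ((Sigma.ι Q j).app d) :=
  Cofan.inj_injective_of_isColimit (isColimitCofanSigmaApp Q d) j

variable {Q}

theorem eq_of_sigmaι_app_eq {j j' : J} {d : D} {y : (Q j).obj d} {y' : (Q j').obj d}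
    (h : (Sigma.ι Q j).app d y = (Sigma.ι Q j').app d y') : j = j' :=
  Cofan.eq_of_inj_apply_eq_of_isColimit (isColimitCofanSigmaApp Q d) y y' h

theorem eq_of_comp_sigmaι_eq_comp_sigmaι {A : D ⥤ Type} [Nonempty (colimit A)] {j j' : J}
    {f : A ⟶ Q j} {f' : A ⟶ Q j'} (h : f ≫ Sigma.ι Q j = f' ≫ Sigma.ι Q j') : j = j' := by
  obtain ⟨d, a, -⟩ := Types.jointly_surjective' (Classical.arbitrary (colimit A))
  exact eq_of_sigmaι_app_eq (ConcreteCategory.congr_hom (NatTrans.congr_app h d) a)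

instance mono_sigmaι (j : J) : Mono (Sigma.ι Q j) :=
  have (d : D) : Mono ((Sigma.ι Q j).app d) :=
    (mono_iff_injective _).2 (sigmaι_app_injective Q j d)
  NatTrans.mono_of_mono_app _

/-- A morphism from an orbit to the constant functor on a type takes a single value. -/
theorem app_eq_app_of_subsingleton_colimit {A : D ⥤ Type} [Subsingleton (colimit A)] {T : Type}
    (g : A ⟶ (Functor.const D).obj T) {d d' : D} (a : A.obj d) (a' : A.obj d') :
    (g.app d a : T) = g.app d' a' := by
  have key {d : D} (a : A.obj d) :
      colimit.desc A ⟨T, g⟩ (colimit.ι A d a) = (g.app d a : T) :=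
    ConcreteCategory.congr_hom (colimit.ι_desc (F := A) ⟨T, g⟩ d) a
  rw [← key a, ← key a', Subsingleton.elim (colimit.ι A d a) (colimit.ι A d' a')]

variable (Q) in
/-- The morphism recording the index of the summand containing an element. -/
noncomputable def sigmaIndex : ∐ Q ⟶ (Functor.const D).obj J :=
  Sigma.desc fun j => { app := fun _ => ↾fun _ => j }

theorem sigmaIndex_app_sigmaι_app {j : J} {d : D} (y : (Q j).obj d) :
    ((sigmaIndex Q).app d ((Sigma.ι Q j).app d y) : J) = j :=
  ConcreteCategory.congr_hom (NatTrans.congr_app (Sigma.ι_desc (f := Q)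
    (fun j => ({ app := fun _ => ↾fun _ => j } : Q j ⟶ (Functor.const D).obj J)) j) d) y

/-- A morphism from an orbit to a coproduct factors through one of the summands. -/
theorem exists_comp_sigmaι_eq {A : D ⥤ Type} [Nonempty (colimit A)] [Subsingleton (colimit A)]
    (g : A ⟶ ∐ Q) : ∃ j, ∃ f : A ⟶ Q j, f ≫ Sigma.ι Q j = g := by
  obtain ⟨d₀, a₀, -⟩ := Types.jointly_surjective' (Classical.arbitrary (colimit A))
  obtain ⟨j, y₀, hy₀⟩ := exists_sigmaι_app_eq Q (g.app d₀ a₀)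
  have lift (d : D) (a : A.obj d) : ∃ y : (Q j).obj d, (Sigma.ι Q j).app d y = g.app d a := by
    obtain ⟨j', y, hy⟩ := exists_sigmaι_app_eq Q (g.app d a)
    have h : (sigmaIndex Q).app d (g.app d a) = ((sigmaIndex Q).app d₀ (g.app d₀ a₀) : J) :=
      app_eq_app_of_subsingleton_colimit (g ≫ sigmaIndex Q) a a₀
    rw [← hy, ← hy₀] at h
    obtain rfl : j' = j :=
      (sigmaIndex_app_sigmaι_app y).symm.trans (h.trans (sigmaIndex_app_sigmaι_app y₀))
    exact ⟨y, hy⟩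
  choose f hf using lift
  refine ⟨j, { app := fun d => ↾(f d), naturality := fun d d' u => ?_ }, ?_⟩
  · ext a
    apply sigmaι_app_injective Q j d'
    exact (hf d' _).trans ((NatTrans.naturality_apply g u a).trans
      ((congrArg _ (hf d a).symm).trans (NatTrans.naturality_apply (Sigma.ι Q j) u (f d a)).symm))
  · ext d a
    exact hf d a

end FunctorCoproducts

/-- The decomposition of a `D`-set into `D`-orbits is unique up to
reordering and isomorphic replacement of the factors. -/
theorem orbit_decomposition_unique {D : Type} [SmallCategory D] (X : D ⥤ Type)
    (I J : Type) (O : I → D ⥤ Type) (Q : J → D ⥤ Type)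
    (hO : ∀ i, Nonempty (colimit (O i) ≃ PUnit))
    (hQ : ∀ j, Nonempty (colimit (Q j) ≃ PUnit))
    (e₁ : X ≅ ∐ O) (e₂ : X ≅ ∐ Q) :
    ∃ h : I ≃ J, ∀ i : I, Nonempty (O i ≅ Q (h i)) := by
  have (i : I) : Nonempty (colimit (O i)) := (hO i).some.nonempty
  have (i : I) : Subsingleton (colimit (O i)) := (hO i).some.subsingleton
  have (j : J) : Nonempty (colimit (Q j)) := (hQ j).some.nonempty
  have (j : J) : Subsingleton (colimit (Q j)) := (hQ j).some.subsingleton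
  let e : ∐ O ≅ ∐ Q := e₁.symm ≪≫ e₂
  choose h f hf using fun i => exists_comp_sigmaι_eq (Sigma.ι O i ≫ e.hom)
  choose k g hg using fun j => exists_comp_sigmaι_eq (Sigma.ι Q j ≫ e.inv)
  have hfg (i : I) : (f i ≫ g (h i)) ≫ Sigma.ι O (k (h i)) = 𝟙 _ ≫ Sigma.ι O i := by
    rw [Category.assoc, hg, reassoc_of% hf i, e.hom_inv_id, Category.comp_id, Category.id_comp]
  have hgf (j : J) : (g j ≫ f (k j)) ≫ Sigma.ι Q (h (k j)) = 𝟙 _ ≫ Sigma.ι Q j := by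
    rw [Category.assoc, hf, reassoc_of% hg j, e.inv_hom_id, Category.comp_id, Category.id_comp]
  have hkh (i : I) : k (h i) = i := eq_of_comp_sigmaι_eq_comp_sigmaι (hfg i)
  refine ⟨⟨h, k, hkh, fun j => eq_of_comp_sigmaι_eq_comp_sigmaι (hgf j)⟩, fun i => ?_⟩
  have lift {j : J} {i : I} (hi : k j = i) :
      ∃ g' : Q j ⟶ O i, g' ≫ Sigma.ι O i = Sigma.ι Q j ≫ e.inv := by
    subst hi
    exact ⟨g j, hg j⟩
  obtain ⟨g', hg'⟩ := lift (hkh i)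
  refine ⟨⟨f i, g', ?_, ?_⟩⟩
  · rw [← cancel_mono (Sigma.ι O i), Category.assoc, hg', reassoc_of% hf i, e.hom_inv_id,
      Category.comp_id, Category.id_comp]
  · rw [← cancel_mono (Sigma.ι Q (h i)), Category.assoc, hf, reassoc_of% hg', e.inv_hom_id,
      Category.comp_id, Category.id_comp]
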